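/- Let K be a totally real number field of degree d ≥ 2, and identify K ⊗_ℚ ℝ with ℝ^d via the embedding σ = (σ_1, …, σ_d). Then there exists a finite set S of totally positive units of O_K such that for every x = (x_1, …, x_d) ∈ ℝ^d one has: (Σ_i σ_i(u) x_i ≥ Σ_i x_i for all totally positive units u of O_K) if and only if (Σ_i σ_i(u) x_i ≥ Σ_i x_i for all u ∈ S). Consequently the set of trace-minimal elements of ℝ^d is a closed polyhedral cone cut out by finitely many half-spaces with K-rational normal vectors, and for every q > 0 the set of trace-minimal x ∈ ℝ^d with Σ_i x_i ≤ q is compact. -/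

import Mathlib

open NumberField

/-!
By Dirichlet's unit theorem there is, for every coordinate `k`, a totally positive unit whose image
in `ℝ^d` is large at `k` and small elsewhere. Minimality against these `d` units alone forces
`x ≥ 0` and `tr x ≤ C * x k` for every `k`, with a constant `C`. The inequality of a unit with some
coordinate above `C` is then automatic, and by Northcott's theorem only finitely many totally
positive units remain. Compactness of the slices also follows from `x ≥ 0`.
-/

section Cone

variable {ι : Type*} [Fintype ι] {T : Set (ι → ℝ)} {t v x : ι → ℝ} {k : ι}

/-- The cone of points `x` of `ℝ^ι` that are trace-minimal with respect to a set `T` of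
multipliers, the trace being the sum of the coordinates. -/
def traceMinimalCone (T : Set (ι → ℝ)) : Set (ι → ℝ) :=
  {x | ∀ t ∈ T, ∑ i, x i ≤ ∑ i, t i * x i}

/-- A multiplier is peaked at `k` if its trace exceeds that of `1` while all its coordinates other
than the `k`-th are small. Any constant below `1` could replace `1 / 2`. -/
structure IsPeakedAt (t : ι → ℝ) (k : ι) : Prop where
  card_lt_sum : (Fintype.card ι : ℝ) < ∑ i, t i
  le_half : ∀ i ≠ k, t i ≤ 1 / 2

theorem traceMinimalCone_image {α : Type*} (f : α → ι → ℝ) (A : Set α) :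
    traceMinimalCone (f '' A) = {x | ∀ a ∈ A, ∑ i, x i ≤ ∑ i, f a i * x i} := by
  ext x
  exact Set.forall_mem_image

theorem traceMinimalCone_anti {S T : Set (ι → ℝ)} (h : S ⊆ T) :
    traceMinimalCone T ⊆ traceMinimalCone S :=
  fun _ hx t ht => hx t (h ht)

theorem isClosed_traceMinimalCone (T : Set (ι → ℝ)) : IsClosed (traceMinimalCone T) := by
  simp only [traceMinimalCone, Set.ofPred_forall]
  exact isClosed_biInter fun t _ => isClosed_le (by fun_prop) (by fun_prop)

theorem IsPeakedAt.nonneg_of_forall_le (ht : IsPeakedAt t k) (hk : ∀ i, x k ≤ x i)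
    (hx : ∑ i, x i ≤ ∑ i, t i * x i) : 0 ≤ x k := by
  have hterm (i : ι) : (t i - 1) * x i ≤ (t i - 1) * x k := by
    by_cases hi : i = k
    · rw [hi]
    · exact mul_le_mul_of_nonpos_left (hk i) (by linarith [ht.le_half i hi])
  have hprod : 0 ≤ (∑ i, t i - Fintype.card ι) * x k :=
    calc 0 ≤ ∑ i, t i * x i - ∑ i, x i := sub_nonneg.2 hx
      _ = ∑ i, (t i - 1) * x i := by simp only [sub_mul, one_mul, Finset.sum_sub_distrib]
      _ ≤ ∑ i, (t i - 1) * x k := Finset.sum_le_sum fun i _ => hterm i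
      _ = (∑ i, t i - Fintype.card ι) * x k := by simp [← Finset.sum_mul]
  exact nonneg_of_mul_nonneg_right hprod (sub_pos.2 ht.card_lt_sum)

theorem nonneg_of_mem_traceMinimalCone (hT : ∀ k, ∃ t ∈ T, IsPeakedAt t k)
    (hx : x ∈ traceMinimalCone T) : 0 ≤ x := by
  intro i
  have : Nonempty ι := ⟨i⟩
  obtain ⟨k, hk⟩ := Finite.exists_min x
  obtain ⟨t, htT, ht⟩ := hT k
  exact (ht.nonneg_of_forall_le hk (hx t htT)).trans (hk i)

theorem IsPeakedAt.sum_le_two_mul (ht : IsPeakedAt t k) (hx₀ : 0 ≤ x)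
    (hx : ∑ i, x i ≤ ∑ i, t i * x i) : ∑ i, x i ≤ 2 * t k * x k := by
  classical
  have hrest : ∑ i ∈ Finset.univ.erase k, t i * x i ≤ ∑ i ∈ Finset.univ.erase k, 1 / 2 * x i :=
    Finset.sum_le_sum fun i hi =>
      mul_le_mul_of_nonneg_right (ht.le_half i (Finset.ne_of_mem_erase hi)) (hx₀ i)
  rw [← Finset.mul_sum] at hrest
  have hsum := Finset.add_sum_erase _ x (Finset.mem_univ k)
  have hsum_mul := Finset.add_sum_erase _ (fun i => t i * x i) (Finset.mem_univ k)
  have hxk : 0 ≤ x k := hx₀ k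
  linarith

theorem IsPeakedAt.sum_le_sum_mul (ht : IsPeakedAt t k) (hx₀ : 0 ≤ x)
    (hx : ∑ i, x i ≤ ∑ i, t i * x i) (hv₀ : 0 ≤ v) (hv : 2 * t k ≤ v k) :
    ∑ i, x i ≤ ∑ i, v i * x i :=
  calc ∑ i, x i ≤ 2 * t k * x k := ht.sum_le_two_mul hx₀ hx
    _ ≤ v k * x k := mul_le_mul_of_nonneg_right hv (hx₀ k)
    _ ≤ ∑ i, v i * x i :=
      Finset.single_le_sum (f := fun i => v i * x i) (fun i _ => mul_nonneg (hv₀ i) (hx₀ i))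
        (Finset.mem_univ k)

theorem exists_finite_traceMinimalCone_eq (hT₀ : ∀ t ∈ T, 0 ≤ t)
    (hpeak : ∀ k, ∃ t ∈ T, IsPeakedAt t k) (hfin : ∀ b, (T ∩ Set.Iic b).Finite) :
    ∃ S ⊆ T, S.Finite ∧ traceMinimalCone S = traceMinimalCone T := by
  choose p hpT hp using hpeak
  let b : ι → ℝ := 2 * ∑ k, p k
  have hpb (k : ι) : 2 * p k ≤ b :=
    mul_le_mul_of_nonneg_left
      (Finset.single_le_sum (fun j _ => hT₀ _ (hpT j)) (Finset.mem_univ k)) zero_le_two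
  have hpS (k : ι) : p k ∈ T ∩ Set.Iic b :=
    ⟨hpT k, (le_mul_of_one_le_left (hT₀ _ (hpT k)) one_le_two).trans (hpb k)⟩
  refine ⟨T ∩ Set.Iic b, Set.inter_subset_left, hfin b, subset_antisymm (fun x hx v hv => ?_)
    (traceMinimalCone_anti Set.inter_subset_left)⟩
  by_cases hvb : v ≤ b
  · exact hx v ⟨hv, hvb⟩
  · obtain ⟨k, hk⟩ : ∃ k, b k < v k := by simpa [Pi.le_def] using hvb
    have hx₀ : 0 ≤ x := nonneg_of_mem_traceMinimalCone (fun k => ⟨p k, hpS k, hp k⟩) hx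
    exact (hp k).sum_le_sum_mul hx₀ (hx _ (hpS k)) (hT₀ v hv) ((hpb k k).trans hk.le)

theorem isCompact_traceMinimalCone_inter_sum_le (hT : ∀ k, ∃ t ∈ T, IsPeakedAt t k) (q : ℝ) :
    IsCompact (traceMinimalCone T ∩ {x | ∑ i, x i ≤ q}) := by
  refine (isCompact_Icc (a := (0 : ι → ℝ)) (b := fun _ => q)).of_isClosed_subset
    ((isClosed_traceMinimalCone T).inter (isClosed_le (by fun_prop) continuous_const)) ?_
  rintro x ⟨hx, hxq⟩
  have hx₀ := nonneg_of_mem_traceMinimalCone hT hx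
  exact ⟨hx₀, fun i => (Finset.single_le_sum (fun j _ => hx₀ j) (Finset.mem_univ i)).trans hxq⟩

end Cone

section Units

variable {K : Type*} [Field K] [NumberField K]

theorem exists_unit_one_lt_and_forall_ne_lt_one [Nontrivial (InfinitePlace K)]
    (w₁ : InfinitePlace K) :
    ∃ u : (𝓞 K)ˣ, 1 < w₁ (u : K) ∧ ∀ w, w ≠ w₁ → w (u : K) < 1 := by
  obtain ⟨u, hu⟩ := Units.dirichletUnitTheorem.exists_unit K w₁
  have hlt (w : InfinitePlace K) (hw : w ≠ w₁) : w (u : K) < 1 := by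
    contrapose! hu
    exact ⟨w, hw, Real.log_nonneg hu⟩
  refine ⟨u, ?_, hlt⟩
  by_contra! hle
  obtain ⟨w₂, hw₂⟩ := exists_ne w₁
  -- Otherwise all terms of the product formula for `u` would be nonpositive, and the one at `w₂`
  -- is negative.
  have hneg : ∑ w : InfinitePlace K, (w.mult : ℝ) * Real.log (w (u : K)) < 0 := by
    refine Finset.sum_neg' (fun w _ => mul_nonpos_of_nonneg_of_nonpos (Nat.cast_nonneg _) ?_)
      ⟨w₂, Finset.mem_univ _, mul_neg_of_pos_of_neg (Nat.cast_pos.2 w₂.mult_pos) (hu w₂ hw₂)⟩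
    by_cases hw : w = w₁
    · exact hw ▸ Real.log_nonpos (apply_nonneg _ _) hle
    · exact (hu w hw).le
  exact hneg.ne (Units.sum_mult_mul_log u)

theorem exists_unit_lt_and_forall_ne_lt [Nontrivial (InfinitePlace K)] (w₁ : InfinitePlace K)
    (C : ℝ) {ε : ℝ} (hε : 0 < ε) :
    ∃ u : (𝓞 K)ˣ, C < w₁ (u : K) ∧ ∀ w, w ≠ w₁ → w (u : K) < ε := by
  obtain ⟨u, hu₁, hu⟩ := exists_unit_one_lt_and_forall_ne_lt_one w₁
  have hlarge : ∀ᶠ n : ℕ in Filter.atTop, C < w₁ (u : K) ^ n :=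
    (tendsto_pow_atTop_atTop_of_one_lt hu₁).eventually_gt_atTop C
  have hsmall : ∀ᶠ n : ℕ in Filter.atTop, ∀ w, w ≠ w₁ → w (u : K) ^ n < ε :=
    Filter.eventually_all.2 fun w => Filter.eventually_imp_distrib_left.2 fun hw =>
      (tendsto_pow_atTop_nhds_zero_of_lt_one (apply_nonneg _ _) (hu w hw)).eventually_lt_const hε
  obtain ⟨n, hn⟩ := (hlarge.and hsmall).exists
  exact ⟨u ^ n, by simpa using hn⟩

theorem finite_units_norm_le (B : ℝ) :
    {u : (𝓞 K)ˣ | ∀ φ : K →+* ℂ, ‖φ (u : K)‖ ≤ B}.Finite := by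
  refine ((Embeddings.finite_of_norm_le K ℂ B).preimage
    (Units.coe_injective K).injOn).subset fun u hu => ?_
  exact ⟨RingOfIntegers.isIntegral_coe _, hu⟩

end Units

section RealEmbeddings

variable {K : Type*} [Field K]

theorem ofRealHom_comp_injective :
    Function.Injective fun τ : K →+* ℝ => Complex.ofRealHom.comp τ :=
  fun _ _ => (RingHom.cancel_left Complex.ofReal_injective).1

/-- The infinite place of a real embedding, which is `a ↦ |τ a|`. -/
noncomputable def placeOfReal (τ : K →+* ℝ) : InfinitePlace K :=
  InfinitePlace.mk (Complex.ofRealHom.comp τ)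

theorem placeOfReal_apply (τ : K →+* ℝ) (a : K) : placeOfReal τ a = |τ a| := by
  simp [placeOfReal, InfinitePlace.apply]

theorem placeOfReal_injective : Function.Injective (placeOfReal (K := K)) := by
  intro τ τ' h
  apply ofRealHom_comp_injective
  rcases InfinitePlace.mk_eq_iff.1 h with h | h
  · exact h
  · ext a
    simpa [ComplexEmbedding.conjugate_coe_eq] using RingHom.congr_fun h a

variable {ι : Type*} {σ : ι → K →+* ℝ}

/-- The units of `𝓞 K` that are positive under every embedding of the family `σ`; these are the
totally positive units when `σ` consists of all the real embeddings. -/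
def totallyPositiveUnits (σ : ι → K →+* ℝ) : Set (𝓞 K)ˣ :=
  {u | ∀ i, 0 < σ i (u : K)}

/-- The image of a unit in `ℝ^ι` under a family `σ` of real embeddings. -/
def unitVector (σ : ι → K →+* ℝ) (u : (𝓞 K)ˣ) : ι → ℝ :=
  fun i => σ i (u : K)

variable [NumberField K] [Fintype ι]

theorem exists_mem_totallyPositiveUnits_isPeakedAt [Nontrivial ι] (hσ : Function.Injective σ)
    (k : ι) : ∃ u ∈ totallyPositiveUnits σ, IsPeakedAt (unitVector σ u) k := by
  have hinj : Function.Injective (placeOfReal ∘ σ) := placeOfReal_injective.comp hσ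
  have : Nontrivial (InfinitePlace K) := hinj.nontrivial
  obtain ⟨u, hlarge, hsmall⟩ :=
    exists_unit_lt_and_forall_ne_lt (placeOfReal (σ k)) (Fintype.card ι) (half_pos one_pos)
  rw [placeOfReal_apply] at hlarge
  have hsq (i : ι) : unitVector σ (u ^ 2) i = |σ i (u : K)| ^ 2 := by simp [unitVector]
  have hpos (i : ι) : 0 < unitVector σ (u ^ 2) i := by
    rw [hsq]
    exact pow_pos (abs_pos.2 (by simp)) 2
  have hcard : (1 : ℝ) ≤ Fintype.card ι := Nat.one_le_cast.2 Fintype.card_pos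
  refine ⟨u ^ 2, hpos, ?_, fun i hi => ?_⟩
  · calc (Fintype.card ι : ℝ) < |σ k (u : K)| := hlarge
      _ ≤ |σ k (u : K)| ^ 2 := le_self_pow₀ (hcard.trans hlarge.le) two_ne_zero
      _ = unitVector σ (u ^ 2) k := (hsq k).symm
      _ ≤ ∑ i, unitVector σ (u ^ 2) i :=
        Finset.single_le_sum (fun i _ => (hpos i).le) (Finset.mem_univ k)
  · have hi_small : |σ i (u : K)| < 1 / 2 := placeOfReal_apply (σ i) _ ▸ hsmall _ (hinj.ne hi)
    rw [hsq]
    exact (pow_le_of_le_one (abs_nonneg _) (by linarith) two_ne_zero).trans hi_small.le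

theorem exists_ofRealHom_comp_eq (hσ : Function.Injective σ)
    (hcard : Fintype.card ι = Module.finrank ℚ K) (φ : K →+* ℂ) :
    ∃ i, Complex.ofRealHom.comp (σ i) = φ :=
  ((Fintype.bijective_iff_injective_and_card _).2
    ⟨ofRealHom_comp_injective.comp hσ, hcard.trans (Embeddings.card K ℂ).symm⟩).surjective φ

theorem finite_unitVector_image_inter_Iic (hσ : Function.Injective σ)
    (hcard : Fintype.card ι = Module.finrank ℚ K) (b : ι → ℝ) :
    (unitVector σ '' totallyPositiveUnits σ ∩ Set.Iic b).Finite := by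
  obtain ⟨B, hB⟩ := (Set.finite_range b).bddAbove
  refine ((finite_units_norm_le B).image (unitVector σ)).subset ?_
  rintro _ ⟨⟨u, hu, rfl⟩, hub⟩
  refine ⟨u, fun φ => ?_, rfl⟩
  obtain ⟨i, rfl⟩ := exists_ofRealHom_comp_eq hσ hcard φ
  calc ‖Complex.ofRealHom.comp (σ i) (u : K)‖ = σ i (u : K) := by simp [abs_of_pos (hu i)]
    _ ≤ b i := hub i
    _ ≤ B := hB (Set.mem_range_self i)

end RealEmbeddings

/-- Let `K` be totally real of degree `d ≥ 2`, identified with `ℝ^d` via the real embeddings.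
There is a finite set `S` of totally positive units such that a point of `ℝ^d` is
trace-minimal (for all totally positive units) iff it satisfies the finitely many half-space
inequalities coming from `S`.  Consequently the trace-minimal set is a closed polyhedral cone
and its slice `tr x ≤ q` is compact for every `q > 0`. -/
theorem stmt5
    (K : Type*) [Field K] [NumberField K] (d : ℕ) (hd2 : 2 ≤ d)
    (σ : Fin d → (K →+* ℝ)) (hσ : Function.Injective σ)
    (hd : d = Module.finrank ℚ K) :
    ∃ S : Finset (𝓞 K)ˣ,
      (∀ u ∈ S, ∀ i, 0 < σ i ((u : 𝓞 K) : K)) ∧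
      (∀ x : Fin d → ℝ,
        (∀ u : (𝓞 K)ˣ, (∀ i, 0 < σ i ((u : 𝓞 K) : K)) →
          ∑ i, x i ≤ ∑ i, σ i ((u : 𝓞 K) : K) * x i) ↔
        ∀ u ∈ S, ∑ i, x i ≤ ∑ i, σ i ((u : 𝓞 K) : K) * x i) ∧
      IsClosed {x : Fin d → ℝ |
        ∀ u : (𝓞 K)ˣ, (∀ i, 0 < σ i ((u : 𝓞 K) : K)) →
          ∑ i, x i ≤ ∑ i, σ i ((u : 𝓞 K) : K) * x i} ∧
      (∀ q : ℝ, 0 < q → IsCompact {x : Fin d → ℝ |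
        (∀ u : (𝓞 K)ˣ, (∀ i, 0 < σ i ((u : 𝓞 K) : K)) →
          ∑ i, x i ≤ ∑ i, σ i ((u : 𝓞 K) : K) * x i) ∧ ∑ i, x i ≤ q}) := by
  have : Nontrivial (Fin d) := Fin.nontrivial_iff_two_le.2 hd2
  have hnonneg : ∀ t ∈ unitVector σ '' totallyPositiveUnits σ, 0 ≤ t :=
    Set.forall_mem_image.2 fun _ hu i => (hu i).le
  have hpeak (k : Fin d) : ∃ t ∈ unitVector σ '' totallyPositiveUnits σ, IsPeakedAt t k :=
    Set.exists_mem_image.2 (exists_mem_totallyPositiveUnits_isPeakedAt hσ k)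
  have hfin := finite_unitVector_image_inter_Iic hσ ((Fintype.card_fin d).trans hd)
  have hclosed := isClosed_traceMinimalCone (unitVector σ '' totallyPositiveUnits σ)
  have hcompact := isCompact_traceMinimalCone_inter_sum_le hpeak
  obtain ⟨S, hS, hSfin, hcone⟩ := Set.exists_subset_image_finite_and.1
    (exists_finite_traceMinimalCone_eq hnonneg hpeak hfin)
  rw [traceMinimalCone_image] at hclosed hcompact
  rw [traceMinimalCone_image, traceMinimalCone_image] at hcone
  lift S to Finset (𝓞 K)ˣ using hSfin
  exact ⟨S, hS, fun x => (Set.ext_iff.1 hcone x).symm, hclosed, fun q _ => hcompact q⟩
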